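/- Let k be a field with char k ≠ 2 and A an n×n Hermitian matrix over H. Then dim_k(range L_A) is divisible by 4, where L_A : Hⁿ → Hⁿ is the k-linear map (x_u) ↦ (Σ_u a_{t,u}·x_u)_t. -/

import Mathlib

/-!
The key point is that `L_A` acts columnwise. Let `m` be the endomorphism of `(k²)ⁿ` obtained by
letting the entries of `A` act on column vectors. Splitting each `2 × 2` matrix into its two
columns identifies `L_A` with `m × m`, so `dim range L_A = 2 · dim range m`.

Let `ω(v, w) = v₀ w₁ - v₁ w₀` on `k²`. The adjugate is the `ω`-adjoint, so for Hermitian `A` the form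
`B(x, y) = Σ_t ω(x_t, (m y)_t)` is antisymmetric, and its kernel is `ker m`. Restricted to a
complement of the kernel it is nondegenerate; as `det Mᵀ = det (-M)` forces `det M = 0` for an
antisymmetric matrix `M` of odd size in characteristic not two, this complement, whose dimension is
`dim range m`, has even dimension.
-/

open Matrix

/-- 2×2 matrices over `k`: the split quaternions, with conjugation `adjugate`
and norm `det`. -/
abbrev M2 (k : Type*) [Field k] := Matrix (Fin 2) (Fin 2) k

variable {k : Type*} [Field k] {n : ℕ}

/-- A matrix with entries in `H = M₂(k)` is Hermitian if `a_{u,t} = adjugate (a_{t,u})`. -/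
def IsHerm (A : Matrix (Fin n) (Fin n) (M2 k)) : Prop :=
  ∀ t u, A u t = (A t u).adjugate

/-- The scalar pairing `⟨A,B⟩` on Hermitian matrices:
`Σ_{t<u} (Q(a_{t,u}+b_{t,u}) − Q(a_{t,u}) − Q(b_{t,u})) + Σ_t r_t s_t`, where
`r_t, s_t` are the scalars on the diagonals. -/
def jip (A B : Matrix (Fin n) (Fin n) (M2 k)) : k :=
  (∑ p ∈ Finset.univ.filter (fun p : Fin n × Fin n => p.1 < p.2),
      ((A p.1 p.2 + B p.1 p.2).det - (A p.1 p.2).det - (B p.1 p.2).det))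
    + ∑ t, (A t t 0 0) * (B t t 0 0)

/-- A nonzero Hermitian matrix `A` has Jordan rank one if `A·B·A = ⟨A,B⟩•A`
for every Hermitian `B`. -/
def JordanRankOne (A : Matrix (Fin n) (Fin n) (M2 k)) : Prop :=
  A ≠ 0 ∧ ∀ B : Matrix (Fin n) (Fin n) (M2 k), IsHerm B → A * B * A = jip A B • A

/-- `L_A : Hⁿ → Hⁿ`, `(x_u) ↦ (Σ_u a_{t,u}·x_u)_t`, as a `k`-linear map. -/
def LA (A : Matrix (Fin n) (Fin n) (M2 k)) : (Fin n → M2 k) →ₗ[k] (Fin n → M2 k) where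
  toFun x := fun t => ∑ u, A t u * x u
  map_add' a b := by
    funext t
    simp [mul_add, Finset.sum_add_distrib]
  map_smul' c a := by
    funext t
    simp [Matrix.mul_smul, Finset.smul_sum]

/-- The `k`-linear endomorphism of `(k²)ⁿ` given by the entries of `A` acting on column vectors. -/
def colMap (A : Matrix (Fin n) (Fin n) (M2 k)) :
    (Fin n → Fin 2 → k) →ₗ[k] (Fin n → Fin 2 → k) where
  toFun x := fun t => ∑ u, A t u *ᵥ x u
  map_add' a b := by
    funext t
    simp only [Pi.add_apply, Matrix.mulVec_add, Finset.sum_add_distrib]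
  map_smul' c a := by
    funext t
    simp [Matrix.mulVec_smul, Finset.smul_sum]

/-- Splitting every `2 × 2` matrix of a tuple into its two columns. -/
def columnsEquiv (k : Type*) [Field k] (n : ℕ) :
    (Fin n → M2 k) ≃ₗ[k] (Fin n → Fin 2 → k) × (Fin n → Fin 2 → k) where
  toFun x := (fun t i => x t i 0, fun t i => x t i 1)
  invFun p := fun t => Matrix.of fun i j => if j = 0 then p.1 t i else p.2 t i
  map_add' a b := rfl
  map_smul' c a := rfl
  left_inv x := by
    funext t
    ext i j
    fin_cases j <;> simp
  right_inv p := by ext <;> simp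

lemma finrank_range_LA (A : Matrix (Fin n) (Fin n) (M2 k)) :
    Module.finrank k (LinearMap.range (LA A)) =
      2 * Module.finrank k (LinearMap.range (colMap A)) := by
  have hcomm : (columnsEquiv k n).toLinearMap ∘ₗ LA A =
      ((colMap A).prodMap (colMap A)) ∘ₗ (columnsEquiv k n).toLinearMap := by
    refine LinearMap.ext fun x => ?_
    refine Prod.ext ?_ ?_ <;> funext t i
    · change (∑ u, A t u * x u) i 0 = (∑ u, A t u *ᵥ fun i => x u i 0) i
      rw [Matrix.sum_apply, Finset.sum_apply]
      rfl
    · change (∑ u, A t u * x u) i 1 = (∑ u, A t u *ᵥ fun i => x u i 1) i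
      rw [Matrix.sum_apply, Finset.sum_apply]
      rfl
  have hrange := congrArg LinearMap.range hcomm
  rw [LinearMap.range_comp, LinearMap.range_comp_of_range_eq_top _ (LinearEquiv.range _)]
    at hrange
  set r := LinearMap.range (colMap A) with hr
  have hprod : LinearMap.range ((colMap A).prodMap (colMap A)) =
      LinearMap.range (r.subtype.prodMap r.subtype) := by
    rw [LinearMap.range_prodMap, LinearMap.range_prodMap, Submodule.range_subtype]
  have hinj : Function.Injective (r.subtype.prodMap r.subtype) := by
    rw [LinearMap.coe_prodMap]
    exact r.injective_subtype.prodMap r.injective_subtype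
  rw [← LinearEquiv.finrank_map_eq (columnsEquiv k n)]
  erw [hrange]
  rw [hprod, LinearMap.finrank_range_of_inj hinj, Module.finrank_prod, two_mul]

/-- A nondegenerate antisymmetric form lives on an even-dimensional space: in odd dimension `d` the
Gram determinant equals `(-1) ^ d = -1` times itself. -/
lemma even_finrank_of_neg_of_nondegenerate {V : Type*} [AddCommGroup V] [Module k V]
    [FiniteDimensional k V] (hchar : (2 : k) ≠ 0) (B : LinearMap.BilinForm k V)
    (hB : ∀ x y, B y x = -B x y) (hnd : ∀ x, (∀ y, B x y = 0) → x = 0) :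
    Even (Module.finrank k V) := by
  by_contra hodd
  rw [Nat.not_even_iff_odd] at hodd
  have hnd' : B.Nondegenerate :=
    ⟨hnd, fun x hx => hnd x fun y => by rw [hB y x, hx y, neg_zero]⟩
  have hdet := (LinearMap.BilinForm.nondegenerate_iff_det_ne_zero (Module.finBasis k V)).1 hnd'
  set M := LinearMap.BilinForm.toMatrix (Module.finBasis k V) B with hM
  have hMt : Mᵀ = -M := by
    ext i j
    simp [hM, LinearMap.BilinForm.toMatrix_apply, hB (Module.finBasis k V i)]
  have h := congrArg Matrix.det hMt
  rw [Matrix.det_transpose, Matrix.det_neg, Fintype.card_fin, hodd.neg_one_pow] at h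
  have h2 : 2 * M.det = 0 := by linear_combination h
  exact (mul_ne_zero hchar hdet) h2

/-- The form `(x, y) ↦ Σ_t ω(x_t, (m y)_t)`, where `m = colMap A` and `ω` is the standard symplectic
form on `k²`. -/
def sympForm (A : Matrix (Fin n) (Fin n) (M2 k)) : LinearMap.BilinForm k (Fin n → Fin 2 → k) :=
  LinearMap.mk₂ k (fun x y => ∑ t, (x t 0 * colMap A y t 1 - x t 1 * colMap A y t 0))
    (fun x x' y => by
      rw [← Finset.sum_add_distrib]
      exact Finset.sum_congr rfl fun t _ => by simp only [Pi.add_apply]; ring)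
    (fun c x y => by
      rw [smul_eq_mul, Finset.mul_sum]
      exact Finset.sum_congr rfl fun t _ => by simp only [Pi.smul_apply, smul_eq_mul]; ring)
    (fun x y y' => by
      rw [← Finset.sum_add_distrib]
      exact Finset.sum_congr rfl fun t _ => by simp only [map_add, Pi.add_apply]; ring)
    (fun c x y => by
      rw [smul_eq_mul, Finset.mul_sum]
      exact Finset.sum_congr rfl fun t _ => by
        simp only [map_smul, Pi.smul_apply, smul_eq_mul]; ring)

lemma sympForm_apply (A : Matrix (Fin n) (Fin n) (M2 k)) (x y : Fin n → Fin 2 → k) :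
    sympForm A x y = ∑ t, (x t 0 * colMap A y t 1 - x t 1 * colMap A y t 0) := rfl

lemma sympForm_antisymm (A : Matrix (Fin n) (Fin n) (M2 k)) (hA : IsHerm A)
    (x y : Fin n → Fin 2 → k) : sympForm A y x = -sympForm A x y := by
  have hexp : ∀ x y : Fin n → Fin 2 → k, sympForm A x y =
      ∑ t, ∑ u, (x t 0 * (A t u *ᵥ y u) 1 - x t 1 * (A t u *ᵥ y u) 0) := by
    intro x y
    simp [sympForm_apply, colMap, Finset.sum_apply, Finset.mul_sum, Finset.sum_sub_distrib]
  rw [hexp, hexp, Finset.sum_comm, ← Finset.sum_neg_distrib]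
  refine Finset.sum_congr rfl fun t _ => ?_
  rw [← Finset.sum_neg_distrib]
  refine Finset.sum_congr rfl fun u _ => ?_
  rw [hA t u, Matrix.adjugate_fin_two]
  simp [Matrix.mulVec, dotProduct, Fin.sum_univ_two]
  ring

/-- Nondegeneracy of `ω` makes the right kernel of the form equal to `ker (colMap A)`. -/
lemma colMap_eq_zero_of_sympForm (A : Matrix (Fin n) (Fin n) (M2 k)) (y : Fin n → Fin 2 → k)
    (h : ∀ x, sympForm A x y = 0) : colMap A y = 0 := by
  funext t i
  have h0 := h (Pi.single t (Pi.single 0 1))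
  have h1 := h (Pi.single t (Pi.single 1 1))
  rw [sympForm_apply, Finset.sum_eq_single t (by simp +contextual) (by simp)] at h0 h1
  fin_cases i
  · simpa using h1
  · simpa using h0

lemma even_finrank_range_colMap (hchar : (2 : k) ≠ 0) (A : Matrix (Fin n) (Fin n) (M2 k))
    (hA : IsHerm A) : Even (Module.finrank k (LinearMap.range (colMap A))) := by
  obtain ⟨W, hW⟩ := Submodule.exists_isCompl (LinearMap.ker (colMap A))
  have hdim : Module.finrank k (LinearMap.range (colMap A)) = Module.finrank k W := by
    have h1 := (colMap A).finrank_range_add_finrank_ker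
    have h2 := Submodule.finrank_add_eq_of_isCompl hW
    omega
  rw [hdim]
  refine even_finrank_of_neg_of_nondegenerate hchar ((sympForm A).restrict W)
    (fun x y => sympForm_antisymm A hA x y) fun x hx => ?_
  have hker : ∀ z ∈ LinearMap.ker (colMap A), ∀ y, sympForm A y z = 0 := by
    intro z hz y
    rw [LinearMap.mem_ker] at hz
    simp [sympForm_apply, hz]
  have hxker : (x : Fin n → Fin 2 → k) ∈ LinearMap.ker (colMap A) := by
    refine colMap_eq_zero_of_sympForm A x fun y => ?_
    obtain ⟨z, hz, w, hw, rfl⟩ := Submodule.mem_sup.1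
      (hW.sup_eq_top ▸ Submodule.mem_top : y ∈ LinearMap.ker (colMap A) ⊔ W)
    have hw0 : sympForm A x w = 0 := hx ⟨w, hw⟩
    rw [sympForm_antisymm A hA, map_add, hker z hz, hw0, add_zero, neg_zero]
  exact Subtype.ext (Submodule.disjoint_def.1 hW.disjoint x hxker x.2)

theorem stmt15 (k : Type*) [Field k] (hchar : (2 : k) ≠ 0) (n : ℕ)
    (A : Matrix (Fin n) (Fin n) (M2 k)) (hA : IsHerm A) :
    4 ∣ Module.finrank k ↥(LinearMap.range (LA A)) := by
  obtain ⟨c, hc⟩ := even_finrank_range_colMap hchar A hA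
  rw [finrank_range_LA, hc]
  exact ⟨c, by ring⟩
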